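/- The inverse Schlömilch density is correctly normalized; equivalently, for every integer K ≥ 2, every τ > 0, every vector α ∈ ℝ^K with all α_i > 0, and every vector β ∈ ℝ^K with all β_i > 0, the integral over the simplex ∫_{S_K} (∑_{j=1}^K β_j/x_j^τ)^{−α_+} ∏_{i=1}^K x_i^{−(τ α_i + 1)} d^{K−1}x equals (1/(τ^{K−1} Γ(α_+))) ∏_{i=1}^K Γ(α_i)/β_i^{α_i}, where α_+ = ∑_{i=1}^K α_i and Γ is the Gamma function. -/

import Mathlib

open MeasureTheory Finset

/-- The fill map: from the `K-1` free coordinates to a point of `ℝ^K`,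
with fill-up value `x_K = 1 - ∑_{i<K-1} x_i`. -/
noncomputable def fillMap (K : ℕ) (u : Fin (K - 1) → ℝ) : Fin K → ℝ :=
  fun i => if h : (i : ℕ) < K - 1 then u ⟨i, h⟩ else 1 - ∑ j, u j

/-- The `(K-1)`-dimensional Lebesgue measure on the probability simplex `S_K`,
obtained by pushing forward Lebesgue measure on the coordinate domain
`{u : u_j ≥ 0, ∑ u_j ≤ 1}` through the fill map. -/
noncomputable def simplexMeasure (K : ℕ) : Measure (Fin K → ℝ) :=
  Measure.map (fillMap K)
    (volume.restrict {u : Fin (K - 1) → ℝ | (∀ j, 0 ≤ u j) ∧ ∑ j, u j ≤ 1})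

/-!
Integrate `∏ i, z i ^ (-(τ * α i + 1)) * exp (-(β i * z i ^ (-τ)))` over the positive orthant in two
ways. Coordinatewise it is a product of gamma integrals. Along rays `z = s • x` with `x` in the
simplex, Lebesgue measure is `s ^ (K - 1) ds dx`, and the factors combine into a single integrand of
the same shape in `s`, with shape parameter `∑ i, α i` and rate `∑ j, β j / x j ^ τ`; the radial
integral is therefore a gamma integral too, and leaves the inverse Schlömilch density in `x`.
-/

section Radial

variable {n : ℕ}

theorem fillMap_castSucc (u : Fin n → ℝ) (i : Fin n) : fillMap (n + 1) u i.castSucc = u i := by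
  simp [fillMap]

theorem fillMap_last (u : Fin n → ℝ) : fillMap (n + 1) u (Fin.last n) = 1 - ∑ j, u j := by
  simp [fillMap]

theorem sum_fillMap (u : Fin n → ℝ) : ∑ i, fillMap (n + 1) u i = 1 := by
  simp [Fin.sum_univ_castSucc, fillMap_castSucc, fillMap_last]

theorem fillMap_nonneg_iff {u : Fin n → ℝ} :
    0 ≤ fillMap (n + 1) u ↔ (∀ j, 0 ≤ u j) ∧ ∑ j, u j ≤ 1 := by
  simp [Pi.le_def, Fin.forall_fin_succ', fillMap_castSucc, fillMap_last]

theorem measurable_fillMap {K : ℕ} : Measurable (fillMap K) := by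
  refine measurable_pi_iff.2 fun i => ?_
  unfold fillMap
  split_ifs <;> fun_prop

/-- Lebesgue measure on the hyperplane `∑ i, x i = 1` of `ℝ^(n+1)` in the first `n` coordinates, the
normalization for which `simplexMeasure (n + 1)` is its restriction to the nonnegative orthant. -/
noncomputable def hyperplaneMeasure (n : ℕ) : Measure (Fin (n + 1) → ℝ) :=
  Measure.map (fillMap (n + 1)) volume

theorem simplexMeasure_succ :
    simplexMeasure (n + 1) = (hyperplaneMeasure n).restrict (Set.Ici 0) := by
  have h_preimage : fillMap (n + 1) ⁻¹' Set.Ici 0 = {u | (∀ j, 0 ≤ u j) ∧ ∑ j, u j ≤ 1} :=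
    Set.ext fun _ => fillMap_nonneg_iff
  rw [hyperplaneMeasure, Measure.restrict_map measurable_fillMap measurableSet_Ici, h_preimage]
  rfl

theorem ae_hyperplaneMeasure_sum_eq_one : ∀ᵐ x ∂hyperplaneMeasure n, ∑ i, x i = 1 :=
  (ae_map_iff measurable_fillMap.aemeasurable
    (measurableSet_eq_fun (by fun_prop) measurable_const)).2 (ae_of_all _ sum_fillMap)

theorem ae_simplexMeasure_mem_stdSimplex :
    ∀ᵐ x ∂simplexMeasure (n + 1), x ∈ stdSimplex ℝ (Fin (n + 1)) := by
  rw [simplexMeasure_succ]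
  filter_upwards [ae_restrict_mem measurableSet_Ici,
    ae_restrict_of_ae ae_hyperplaneMeasure_sum_eq_one] with x hx_nonneg hx_sum
  exact ⟨hx_nonneg, hx_sum⟩

theorem lintegral_comp_smul_of_ne_zero {E : Type*} [NormedAddCommGroup E] [NormedSpace ℝ E]
    [MeasurableSpace E] [BorelSpace E] [FiniteDimensional ℝ E] (μ : Measure E)
    [μ.IsAddHaarMeasure] {f : E → ENNReal} (hf : Measurable f) {r : ℝ} (hr : r ≠ 0) :
    ∫⁻ x, f (r • x) ∂μ = ENNReal.ofReal |(r ^ Module.finrank ℝ E)⁻¹| * ∫⁻ x, f x ∂μ := by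
  rw [← lintegral_map hf (measurable_const_smul r), Measure.map_addHaar_smul μ hr,
    lintegral_smul_measure, smul_eq_mul]

theorem measurable_snoc_sub_sum :
    Measurable fun p : ℝ × (Fin n → ℝ) =>
      (Fin.snoc p.2 (p.1 - ∑ j, p.2 j) : Fin (n + 1) → ℝ) := by
  refine measurable_pi_iff.2 (Fin.lastCases ?_ fun i => ?_)
  · simp only [Fin.snoc_last]
    fun_prop
  · simp only [Fin.snoc_castSucc]
    fun_prop

theorem lintegral_eq_lintegral_snoc_sub_sum {f : (Fin (n + 1) → ℝ) → ENNReal}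
    (hf : Measurable f) :
    ∫⁻ z, f z = ∫⁻ s : ℝ, ∫⁻ u : Fin n → ℝ, f (Fin.snoc u (s - ∑ j, u j)) := by
  let e := MeasurableEquiv.piFinSuccAbove (fun _ : Fin (n + 1) => ℝ) (Fin.last n)
  have he : MeasurePreserving e.symm (volume.prod volume) volume :=
    (volume_preserving_piFinSuccAbove (fun _ : Fin (n + 1) => ℝ) (Fin.last n)).symm
  have he_apply (t : ℝ) (u : Fin n → ℝ) : e.symm (t, u) = Fin.snoc u t :=
    Fin.insertNth_last' t u
  calc ∫⁻ z, f z
      = ∫⁻ u : Fin n → ℝ, ∫⁻ t : ℝ, f (e.symm (t, u)) := by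
        rw [← he.lintegral_comp hf]
        exact lintegral_prod_symm' _ (hf.comp e.symm.measurable)
    _ = ∫⁻ u : Fin n → ℝ, ∫⁻ s : ℝ, f (Fin.snoc u (s - ∑ j, u j)) := by
        simp_rw [he_apply]
        exact lintegral_congr fun u =>
          (lintegral_sub_right_eq_self (fun t => f (Fin.snoc u t)) _).symm
    _ = ∫⁻ s : ℝ, ∫⁻ u : Fin n → ℝ, f (Fin.snoc u (s - ∑ j, u j)) :=
        lintegral_lintegral_swap
          (hf.comp (measurable_snoc_sub_sum.comp measurable_swap)).aemeasurable

theorem smul_fillMap (s : ℝ) (u : Fin n → ℝ) :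
    s • fillMap (n + 1) u = Fin.snoc (s • u) (s - ∑ j, (s • u) j) := by
  ext i
  refine Fin.lastCases ?_ (fun i => ?_) i
  · simp [fillMap_last, mul_sub, Finset.mul_sum]
  · simp [fillMap_castSucc]

theorem lintegral_snoc_sub_sum {f : (Fin (n + 1) → ℝ) → ENNReal} (hf : Measurable f)
    {s : ℝ} (hs : s ≠ 0) :
    ∫⁻ u : Fin n → ℝ, f (Fin.snoc u (s - ∑ j, u j)) =
      ENNReal.ofReal (|s| ^ n) * ∫⁻ u : Fin n → ℝ, f (s • fillMap (n + 1) u) := by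
  have hs_pow : 0 < |s| ^ n := by positivity
  have h_scale := lintegral_comp_smul_of_ne_zero volume
    (hf.comp (measurable_snoc_sub_sum.comp (measurable_prodMk_left (x := s)))) hs
  simp only [Function.comp_apply] at h_scale
  simp_rw [smul_fillMap]
  rw [h_scale, Module.finrank_fin_fun, abs_inv, abs_pow, ← mul_assoc,
    ← ENNReal.ofReal_mul hs_pow.le, mul_inv_cancel₀ hs_pow.ne', ENNReal.ofReal_one, one_mul]

theorem lintegral_eq_lintegral_hyperplaneMeasure {f : (Fin (n + 1) → ℝ) → ENNReal}
    (hf : Measurable f) :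
    ∫⁻ z, f z =
      ∫⁻ x, (∫⁻ s : ℝ, ENNReal.ofReal (|s| ^ n) * f (s • x)) ∂hyperplaneMeasure n := by
  have h_meas : Measurable fun p : (Fin (n + 1) → ℝ) × ℝ =>
      ENNReal.ofReal (|p.2| ^ n) * f (p.2 • p.1) := by fun_prop
  calc ∫⁻ z, f z
      = ∫⁻ s : ℝ, ∫⁻ u : Fin n → ℝ, f (Fin.snoc u (s - ∑ j, u j)) :=
        lintegral_eq_lintegral_snoc_sub_sum hf
    _ = ∫⁻ s : ℝ, ∫⁻ u : Fin n → ℝ, ENNReal.ofReal (|s| ^ n) * f (s • fillMap (n + 1) u) := by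
        refine lintegral_congr_ae ?_
        filter_upwards [Measure.ae_ne volume (0 : ℝ)] with s hs
        rw [lintegral_snoc_sub_sum hf hs, lintegral_const_mul' _ _ ENNReal.ofReal_ne_top]
    _ = ∫⁻ u : Fin n → ℝ, ∫⁻ s : ℝ, ENNReal.ofReal (|s| ^ n) * f (s • fillMap (n + 1) u) :=
        lintegral_lintegral_swap (h_meas.comp
          ((measurable_fillMap.comp measurable_snd).prodMk measurable_fst)).aemeasurable
    _ = _ := (lintegral_map h_meas.lintegral_prod_right' measurable_fillMap).symm

theorem smul_nonneg_iff_of_sum_eq_one {ι : Type*} [Fintype ι] {x : ι → ℝ} (hx : ∑ i, x i = 1)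
    {s : ℝ} (hs : s ≠ 0) : 0 ≤ s • x ↔ 0 < s ∧ 0 ≤ x := by
  refine ⟨fun h => ?_, fun ⟨hs, hx⟩ => smul_nonneg hs.le hx⟩
  have h_sum : ∑ i, (s • x) i = s := by simp [← Finset.mul_sum, hx]
  have hs_pos : 0 < s := lt_of_le_of_ne (h_sum ▸ Finset.sum_nonneg fun i _ => h i) hs.symm
  exact ⟨hs_pos, fun i => nonneg_of_mul_nonneg_right (h i) hs_pos⟩

theorem lintegral_indicator_Ici_smul_of_sum_eq_one {ι : Type*} [Fintype ι] (f : (ι → ℝ) → ENNReal)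
    {x : ι → ℝ} (hx : ∑ i, x i = 1) (m : ℕ) :
    ∫⁻ s : ℝ, ENNReal.ofReal (|s| ^ m) * (Set.Ici 0).indicator f (s • x) =
      (Set.Ici 0).indicator
        (fun y => ∫⁻ s in Set.Ioi (0 : ℝ), ENNReal.ofReal (s ^ m) * f (s • y)) x := by
  have h_iff {s : ℝ} (hs : s ≠ 0) := smul_nonneg_iff_of_sum_eq_one hx hs
  by_cases hx_nonneg : 0 ≤ x
  · rw [Set.indicator_of_mem (Set.mem_Ici.2 hx_nonneg), ← lintegral_indicator measurableSet_Ioi]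
    refine lintegral_congr_ae ?_
    filter_upwards [Measure.ae_ne volume (0 : ℝ)] with s hs
    by_cases hs_pos : 0 < s
    · simp [Set.indicator, h_iff hs, hs_pos, abs_of_pos hs_pos, hx_nonneg]
    · simp [Set.indicator, h_iff hs, hs_pos]
  · rw [Set.indicator_of_notMem (mt Set.mem_Ici.1 hx_nonneg)]
    refine lintegral_eq_zero_of_ae_eq_zero ?_
    filter_upwards [Measure.ae_ne volume (0 : ℝ)] with s hs
    simp [Set.indicator, h_iff hs, hx_nonneg]

theorem setLIntegral_Ici_eq_lintegral_simplexMeasure {f : (Fin (n + 1) → ℝ) → ENNReal}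
    (hf : Measurable f) :
    ∫⁻ z in Set.Ici 0, f z =
      ∫⁻ x, (∫⁻ s in Set.Ioi (0 : ℝ), ENNReal.ofReal (s ^ n) * f (s • x))
        ∂simplexMeasure (n + 1) := by
  rw [simplexMeasure_succ, ← lintegral_indicator measurableSet_Ici,
    ← lintegral_indicator measurableSet_Ici,
    lintegral_eq_lintegral_hyperplaneMeasure (hf.indicator measurableSet_Ici)]
  refine lintegral_congr_ae ?_
  filter_upwards [ae_hyperplaneMeasure_sum_eq_one] with x hx
  exact lintegral_indicator_Ici_smul_of_sum_eq_one f hx n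

end Radial

section Gamma

variable {τ a b : ℝ}

/-- Unnormalized density of the generalized inverse gamma distribution, the law of `Y ^ (-1 / τ)`
for `Y` gamma distributed with shape `a` and rate `b`. -/
noncomputable def genInvGammaKernel (τ a b t : ℝ) : ℝ :=
  t ^ (-(τ * a + 1)) * Real.exp (-(b * t ^ (-τ)))

theorem genInvGammaKernel_nonneg {t : ℝ} (ht : 0 ≤ t) : 0 ≤ genInvGammaKernel τ a b t := by
  unfold genInvGammaKernel
  positivity

theorem measurable_genInvGammaKernel : Measurable (genInvGammaKernel τ a b) := by
  unfold genInvGammaKernel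
  fun_prop

-- At `x = 0` this relies on the conventions `0 ^ p = 0` for `p ≠ 0` and `0⁻¹ = 0`.
theorem genInvGammaKernel_mul {s x : ℝ} (hs : 0 ≤ s) (hx : 0 ≤ x) :
    genInvGammaKernel τ a b (s * x) =
      x ^ (-(τ * a + 1)) * s ^ (-(τ * a + 1)) * Real.exp (-(b / x ^ τ * s ^ (-τ))) := by
  rw [genInvGammaKernel, Real.mul_rpow hs hx, Real.mul_rpow hs hx, Real.rpow_neg hx τ,
    mul_comm (s ^ (-(τ * a + 1)))]
  congr 3
  ring

theorem integral_genInvGammaKernel (hτ : τ ≠ 0) (ha : 0 < a) (hb : 0 < b) :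
    ∫ t in Set.Ioi 0, genInvGammaKernel τ a b t = Real.Gamma a / (|τ| * b ^ a) := by
  have h_subst (t : ℝ) (ht : t ∈ Set.Ioi 0) :
      (|-τ| * t ^ (-τ - 1)) • ((t ^ (-τ)) ^ (a - 1) * Real.exp (-(b * t ^ (-τ)))) =
        |τ| * genInvGammaKernel τ a b t := by
    have h_exponent : -(τ * a + 1) = (-τ - 1) + -τ * (a - 1) := by ring
    rw [genInvGammaKernel, h_exponent, Real.rpow_add ht, Real.rpow_mul (le_of_lt ht), abs_neg,
      smul_eq_mul]
    ring
  have h_gamma :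
      |τ| * ∫ t in Set.Ioi 0, genInvGammaKernel τ a b t = (1 / b) ^ a * Real.Gamma a := by
    rw [← integral_const_mul, ← setIntegral_congr_fun measurableSet_Ioi h_subst,
      integral_comp_rpow_Ioi (fun y => y ^ (a - 1) * Real.exp (-(b * y))) (neg_ne_zero.2 hτ),
      Real.integral_rpow_mul_exp_neg_mul_Ioi ha hb]
  rw [one_div, Real.inv_rpow hb.le] at h_gamma
  have hτ_abs : |τ| ≠ 0 := abs_ne_zero.2 hτ
  rw [← mul_right_inj' hτ_abs, h_gamma]
  field_simp

theorem integrableOn_genInvGammaKernel (hτ : τ ≠ 0) (ha : 0 < a) (hb : 0 < b) :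
    IntegrableOn (genInvGammaKernel τ a b) (Set.Ioi 0) := by
  refine Integrable.of_integral_ne_zero ?_
  rw [integral_genInvGammaKernel hτ ha hb]
  have := Real.Gamma_pos_of_pos ha
  positivity

theorem lintegral_genInvGammaKernel (hτ : τ ≠ 0) (ha : 0 < a) (hb : 0 < b) :
    ∫⁻ t in Set.Ioi 0, ENNReal.ofReal (genInvGammaKernel τ a b t) =
      ENNReal.ofReal (Real.Gamma a / (|τ| * b ^ a)) := by
  rw [← integral_genInvGammaKernel hτ ha hb,
    ofReal_integral_eq_lintegral_ofReal (integrableOn_genInvGammaKernel hτ ha hb)]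
  filter_upwards [ae_restrict_mem measurableSet_Ioi] with t ht
  exact genInvGammaKernel_nonneg (le_of_lt ht)

end Gamma

section Schlomilch

variable {ι : Type*} [Fintype ι] {τ : ℝ} {α β : ι → ℝ}

/-- Unnormalized inverse Schlömilch density; a negative `τ` gives the Schlömilch density with
parameter `-τ`. -/
noncomputable def invSchlomilchKernel (τ : ℝ) (α β x : ι → ℝ) : ℝ :=
  (∑ j, β j / x j ^ τ) ^ (-(∑ i, α i)) * ∏ i, x i ^ (-(τ * α i + 1))

theorem invSchlomilchKernel_nonneg {x : ι → ℝ} (hβ : ∀ i, 0 ≤ β i) (hx : 0 ≤ x) :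
    0 ≤ invSchlomilchKernel τ α β x := by
  refine mul_nonneg (Real.rpow_nonneg (Finset.sum_nonneg fun j _ => ?_) _)
    (Finset.prod_nonneg fun i _ => Real.rpow_nonneg (hx i) _)
  exact div_nonneg (hβ j) (Real.rpow_nonneg (hx j) _)

theorem measurable_invSchlomilchKernel : Measurable (invSchlomilchKernel τ α β) := by
  unfold invSchlomilchKernel
  fun_prop

theorem lintegral_prod_genInvGammaKernel (hτ : τ ≠ 0) (hα : ∀ i, 0 < α i) (hβ : ∀ i, 0 < β i) :
    ∫⁻ z in Set.Ici (0 : ι → ℝ), ENNReal.ofReal (∏ i, genInvGammaKernel τ (α i) (β i) (z i)) =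
      ENNReal.ofReal (∏ i, Real.Gamma (α i) / (|τ| * β i ^ α i)) := by
  have h_restrict : (volume : Measure (ι → ℝ)).restrict (Set.Ici 0) =
      Measure.pi fun _ => volume.restrict (Set.Ioi 0) := by
    simp_rw [← Set.pi_univ_Ici, volume_pi, Measure.restrict_pi_pi, Pi.zero_apply,
      restrict_Ioi_eq_restrict_Ici]
  have h_nonneg : 0 ≤ᵐ[volume.restrict (Set.Ici (0 : ι → ℝ))]
      fun z => ∏ i, genInvGammaKernel τ (α i) (β i) (z i) := by
    filter_upwards [ae_restrict_mem measurableSet_Ici] with z hz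
    exact Finset.prod_nonneg fun i _ => genInvGammaKernel_nonneg (hz i)
  rw [← ofReal_integral_eq_lintegral_ofReal _ h_nonneg, h_restrict, integral_fintype_prod_eq_prod]
  · simp_rw [integral_genInvGammaKernel hτ (hα _) (hβ _)]
  · rw [h_restrict]
    exact Integrable.fintype_prod fun i => integrableOn_genInvGammaKernel hτ (hα i) (hβ i)

theorem pow_mul_prod_genInvGammaKernel_smul [Nonempty ι] {s : ℝ} (hs : 0 < s) {x : ι → ℝ}
    (hx : 0 ≤ x) :
    s ^ (Fintype.card ι - 1) * ∏ i, genInvGammaKernel τ (α i) (β i) ((s • x) i) =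
      (∏ i, x i ^ (-(τ * α i + 1))) *
        genInvGammaKernel τ (∑ i, α i) (∑ j, β j / x j ^ τ) s := by
  have h_pow : s ^ (Fintype.card ι - 1) * ∏ i, s ^ (-(τ * α i + 1)) =
      s ^ (-(τ * ∑ i, α i + 1)) := by
    rw [← Real.rpow_natCast, ← Real.rpow_sum_of_pos hs, ← Real.rpow_add hs,
      Nat.cast_pred Fintype.card_pos]
    simp only [Finset.sum_neg_distrib, Finset.sum_add_distrib, ← Finset.mul_sum, Finset.sum_const,
      Finset.card_univ, nsmul_eq_mul]
    ring_nf
  have h_exp : ∏ i, Real.exp (-(β i / x i ^ τ * s ^ (-τ))) =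
      Real.exp (-((∑ j, β j / x j ^ τ) * s ^ (-τ))) := by
    rw [← Real.exp_sum, Finset.sum_neg_distrib, Finset.sum_mul]
  have h_factor (i : ι) := genInvGammaKernel_mul (τ := τ) (a := α i) (b := β i) hs.le (hx i)
  simp only [Pi.smul_apply, smul_eq_mul, h_factor, Finset.prod_mul_distrib]
  rw [h_exp, genInvGammaKernel, ← h_pow]
  ring

theorem sum_div_rpow_pos (hβ : ∀ i, 0 < β i) {x : ι → ℝ} (hx : 0 < x) :
    0 < ∑ j, β j / x j ^ τ := by
  obtain ⟨hx_nonneg, i, hi⟩ := Pi.lt_def.1 hx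
  refine Finset.sum_pos' (fun j _ => ?_) ⟨i, Finset.mem_univ i, ?_⟩
  · exact div_nonneg (hβ j).le (Real.rpow_nonneg (hx_nonneg j) τ)
  · exact div_pos (hβ i) (Real.rpow_pos_of_pos hi τ)

theorem lintegral_pow_mul_prod_genInvGammaKernel_smul (hτ : τ ≠ 0) (hα : ∀ i, 0 < α i)
    (hβ : ∀ i, 0 < β i) {x : ι → ℝ} (hx : 0 < x) :
    ∫⁻ s in Set.Ioi (0 : ℝ), ENNReal.ofReal (s ^ (Fintype.card ι - 1)) *
        ENNReal.ofReal (∏ i, genInvGammaKernel τ (α i) (β i) ((s • x) i)) =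
      ENNReal.ofReal (Real.Gamma (∑ i, α i) / |τ|) *
        ENNReal.ofReal (invSchlomilchKernel τ α β x) := by
  obtain ⟨hx_nonneg, i₀, -⟩ := Pi.lt_def.1 hx
  have : Nonempty ι := ⟨i₀⟩
  have hα_sum : 0 < ∑ i, α i := Finset.sum_pos (fun i _ => hα i) Finset.univ_nonempty
  have hβ_sum : 0 < ∑ j, β j / x j ^ τ := sum_div_rpow_pos hβ hx
  have h_prod : 0 ≤ ∏ i, x i ^ (-(τ * α i + 1)) :=
    Finset.prod_nonneg fun i _ => Real.rpow_nonneg (hx_nonneg i) _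
  have h_integrand (s : ℝ) (hs : s ∈ Set.Ioi 0) :
      ENNReal.ofReal (s ^ (Fintype.card ι - 1)) *
          ENNReal.ofReal (∏ i, genInvGammaKernel τ (α i) (β i) ((s • x) i)) =
        ENNReal.ofReal (∏ i, x i ^ (-(τ * α i + 1))) *
          ENNReal.ofReal (genInvGammaKernel τ (∑ i, α i) (∑ j, β j / x j ^ τ) s) := by
    rw [← ENNReal.ofReal_mul (pow_nonneg (le_of_lt hs) _), ← ENNReal.ofReal_mul h_prod,
      pow_mul_prod_genInvGammaKernel_smul hs hx_nonneg]
  rw [setLIntegral_congr_fun measurableSet_Ioi h_integrand,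
    lintegral_const_mul' _ _ ENNReal.ofReal_ne_top, lintegral_genInvGammaKernel hτ hα_sum hβ_sum,
    ← ENNReal.ofReal_mul h_prod,
    ← ENNReal.ofReal_mul (div_nonneg (Real.Gamma_pos_of_pos hα_sum).le (abs_nonneg τ)),
    invSchlomilchKernel, Real.rpow_neg hβ_sum.le]
  congr 1
  field_simp

end Schlomilch

theorem lintegral_invSchlomilchKernel {n : ℕ} {τ : ℝ} {α β : Fin (n + 1) → ℝ} (hτ : τ ≠ 0)
    (hα : ∀ i, 0 < α i) (hβ : ∀ i, 0 < β i) :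
    ENNReal.ofReal (Real.Gamma (∑ i, α i) / |τ|) *
        ∫⁻ x, ENNReal.ofReal (invSchlomilchKernel τ α β x) ∂simplexMeasure (n + 1) =
      ENNReal.ofReal (∏ i, Real.Gamma (α i) / (|τ| * β i ^ α i)) := by
  have h_meas : Measurable fun z : Fin (n + 1) → ℝ =>
      ENNReal.ofReal (∏ i, genInvGammaKernel τ (α i) (β i) (z i)) := by
    have (i : Fin (n + 1)) : Measurable (genInvGammaKernel τ (α i) (β i)) :=
      measurable_genInvGammaKernel
    fun_prop
  rw [← lintegral_prod_genInvGammaKernel hτ hα hβ,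
    setLIntegral_Ici_eq_lintegral_simplexMeasure h_meas,
    ← lintegral_const_mul' _ _ ENNReal.ofReal_ne_top]
  refine lintegral_congr_ae ?_
  filter_upwards [ae_simplexMeasure_mem_stdSimplex] with x hx
  have hx_pos : 0 < x := lt_of_le_of_ne hx.1 (by rintro rfl; simpa using hx.2)
  simpa using (lintegral_pow_mul_prod_genInvGammaKernel_smul hτ hα hβ hx_pos).symm

theorem integral_invSchlomilchKernel {n : ℕ} {τ : ℝ} {α β : Fin (n + 1) → ℝ} (hτ : τ ≠ 0)
    (hα : ∀ i, 0 < α i) (hβ : ∀ i, 0 < β i) :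
    Real.Gamma (∑ i, α i) / |τ| * ∫ x, invSchlomilchKernel τ α β x ∂simplexMeasure (n + 1) =
      ∏ i, Real.Gamma (α i) / (|τ| * β i ^ α i) := by
  have hΓ_sum : 0 < Real.Gamma (∑ i, α i) :=
    Real.Gamma_pos_of_pos (Finset.sum_pos (fun i _ => hα i) Finset.univ_nonempty)
  have h_prod_nonneg : 0 ≤ ∏ i, Real.Gamma (α i) / (|τ| * β i ^ α i) :=
    Finset.prod_nonneg fun i _ => div_nonneg (Real.Gamma_pos_of_pos (hα i)).le
      (mul_nonneg (abs_nonneg τ) (Real.rpow_nonneg (hβ i).le _))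
  have h_kernel_nonneg : 0 ≤ᵐ[simplexMeasure (n + 1)] invSchlomilchKernel τ α β := by
    filter_upwards [ae_simplexMeasure_mem_stdSimplex] with x hx
    exact invSchlomilchKernel_nonneg (fun i => (hβ i).le) hx.1
  rw [integral_eq_lintegral_of_nonneg_ae h_kernel_nonneg
      measurable_invSchlomilchKernel.aestronglyMeasurable,
    ← ENNReal.toReal_ofReal h_prod_nonneg, ← lintegral_invSchlomilchKernel hτ hα hβ,
    ENNReal.toReal_mul, ENNReal.toReal_ofReal (by positivity)]

theorem inverse_schlomilch_normalization_general
    (K : ℕ) (hK : K ≠ 0) (τ : ℝ) (hτ : τ ≠ 0)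
    (α β : Fin K → ℝ) (hα : ∀ i, 0 < α i) (hβ : ∀ i, 0 < β i) :
    ∫ x, (∑ j, β j / x j ^ τ) ^ (-(∑ i, α i)) * ∏ i, x i ^ (-(τ * α i + 1))
        ∂(simplexMeasure K)
      = (1 / (|τ| ^ (K - 1) * Real.Gamma (∑ i, α i))) *
          ∏ i, Real.Gamma (α i) / β i ^ (α i) := by
  obtain ⟨n, rfl⟩ := Nat.exists_eq_add_one_of_ne_zero hK
  change ∫ x, invSchlomilchKernel τ α β x ∂simplexMeasure (n + 1) = _
  have hΓ_sum : 0 < Real.Gamma (∑ i, α i) :=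
    Real.Gamma_pos_of_pos (Finset.sum_pos (fun i _ => hα i) Finset.univ_nonempty)
  have h_prod : ∏ i, Real.Gamma (α i) / (|τ| * β i ^ α i) =
      (∏ i, Real.Gamma (α i) / β i ^ α i) / |τ| ^ (n + 1) := by
    simp_rw [mul_comm |τ|, ← div_div, Finset.prod_div_distrib, Finset.prod_const, Finset.card_fin]
  have h_integral := integral_invSchlomilchKernel hτ hα hβ
  rw [h_prod, pow_succ] at h_integral
  rw [Nat.add_sub_cancel]
  field_simp at h_integral ⊢
  linarith

/-- Normalization of the inverse Schlömilch density. -/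
theorem inverse_schlomilch_normalization
    (K : ℕ) (hK : 2 ≤ K) (τ : ℝ) (hτ : 0 < τ)
    (α β : Fin K → ℝ) (hα : ∀ i, 0 < α i) (hβ : ∀ i, 0 < β i) :
    ∫ x, (∑ j, β j / x j ^ τ) ^ (-(∑ i, α i)) * ∏ i, x i ^ (-(τ * α i + 1))
        ∂(simplexMeasure K)
      = (1 / (τ ^ (K - 1) * Real.Gamma (∑ i, α i))) *
          ∏ i, Real.Gamma (α i) / β i ^ (α i) := by
  rw [inverse_schlomilch_normalization_general K (by lia) τ hτ.ne' α β hα hβ, abs_of_pos hτ]
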